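/- arXiv:1704.03122 — 2 statements merged into one kernel-verified Lean document; each statement's English description precedes it below -/
import Mathlib

section
/- Let n ≥ 6 be an integer and let G be a connected simple graph on n vertices such that the multiplicity of the largest distance Laplacian eigenvalue of G equals n−3. Then the diameter of G equals 2. -/
open Matrix

/-- The distance Laplacian matrix of a graph: diagonal entries are the transmissions
`Tr(v) = ∑ u, d(v,u)`, off-diagonal entries are `-d(u,v)`. -/
noncomputable def distLaplacian {V : Type*} [Fintype V] [DecidableEq V]
    (G : SimpleGraph V) : Matrix V V ℝ :=
  Matrix.of fun i j => if i = j then ∑ k : V, (G.dist i k : ℝ) else -(G.dist i j : ℝ)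

/-- The multiplicity of `μ` as an eigenvalue of `M`, i.e. the dimension of the
corresponding eigenspace. -/
noncomputable def eigMult {V : Type*} [Fintype V] (M : Matrix V V ℝ) (μ : ℝ) : ℕ :=
  Module.finrank ℝ (Module.End.eigenspace M.mulVecLin μ)

/-- The largest eigenvalue of a matrix. -/
noncomputable def lambdaMax {V : Type*} [Fintype V] (M : Matrix V V ℝ) : ℝ :=
  sSup {μ : ℝ | Module.End.HasEigenvalue M.mulVecLin μ}

/-- The transmission of a vertex. -/
noncomputable def transmission {V : Type*} [Fintype V] (G : SimpleGraph V) (v : V) : ℕ :=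
  ∑ u : V, G.dist v u

/-- Euclidean dot product in the plane. -/
def dot2 (a b : ℝ × ℝ) : ℝ := a.1 * b.1 + a.2 * b.2

/-- Planar determinant. -/
def det2 (a b : ℝ × ℝ) : ℝ := a.1 * b.2 - a.2 * b.1

lemma dot2_comm (a b : ℝ × ℝ) : dot2 a b = dot2 b a := by
  simp only [dot2]; ring

lemma dot2_self_nonneg (a : ℝ × ℝ) : 0 ≤ dot2 a a := by
  simp only [dot2]; nlinarith [sq_nonneg a.1, sq_nonneg a.2]

lemma dot2_frame (u a b : ℝ × ℝ) :
    dot2 u u * dot2 a b = dot2 a u * dot2 b u + det2 a u * det2 b u := by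
  simp only [dot2, det2]; ring

lemma dot2_self_pos_of_ne {a b : ℝ × ℝ} (h : dot2 a b ≠ 0) : 0 < dot2 a a := by
  rcases (dot2_self_nonneg a).lt_or_eq with h1 | h1
  · exact h1
  · exfalso; apply h
    simp only [dot2] at h1 ⊢
    have h2 : a.1 = 0 := by nlinarith [sq_nonneg a.1, sq_nonneg a.2]
    have h3 : a.2 = 0 := by nlinarith [sq_nonneg a.1, sq_nonneg a.2]
    simp [h2, h3]

/-- The plane has no four pairwise obtuse vectors. -/
lemma four_neg {u v t w : ℝ × ℝ} (huv : dot2 u v < 0) (hut : dot2 u t < 0) (huw : dot2 u w < 0)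
    (hvt : dot2 v t < 0) (hvw : dot2 v w < 0) (htw : dot2 t w < 0) : False := by
  have hu := dot2_self_pos_of_ne huv.ne
  have f1 := dot2_frame u v t
  have f2 := dot2_frame u v w
  have f3 := dot2_frame u t w
  rw [dot2_comm v u, dot2_comm t u] at f1
  rw [dot2_comm v u, dot2_comm w u] at f2
  rw [dot2_comm t u, dot2_comm w u] at f3
  have g1 : det2 v u * det2 t u < 0 := by
    nlinarith [mul_neg_of_pos_of_neg hu hvt, mul_pos_of_neg_of_neg huv hut]
  have g2 : det2 v u * det2 w u < 0 := by
    nlinarith [mul_neg_of_pos_of_neg hu hvw, mul_pos_of_neg_of_neg huv huw]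
  have g3 : det2 t u * det2 w u < 0 := by
    nlinarith [mul_neg_of_pos_of_neg hu htw, mul_pos_of_neg_of_neg hut huw]
  have : (det2 v u * det2 t u) * (det2 v u * det2 w u) > 0 := mul_pos_of_neg_of_neg g1 g2
  nlinarith [mul_nonneg (sq_nonneg (det2 v u)) (neg_pos.2 g3).le]

lemma three_neg {u v t w : ℝ × ℝ} (huv : dot2 u v < 0) (hut : dot2 u t < 0) (hvt : dot2 v t < 0)
    (huw : 0 < dot2 u w) (hvw : 0 ≤ dot2 v w) (htw : 0 ≤ dot2 t w) : False := by
  have hu := dot2_self_pos_of_ne huv.ne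
  have f1 := dot2_frame u v t
  have f2 := dot2_frame u v w
  have f3 := dot2_frame u t w
  rw [dot2_comm v u, dot2_comm t u] at f1
  rw [dot2_comm v u, dot2_comm w u] at f2
  rw [dot2_comm t u, dot2_comm w u] at f3
  have g1 : det2 v u * det2 t u < 0 := by
    nlinarith [mul_neg_of_pos_of_neg hu hvt, mul_pos_of_neg_of_neg huv hut]
  have g2 : 0 < det2 v u * det2 w u := by
    nlinarith [mul_nonneg hu.le hvw, mul_neg_of_neg_of_pos huv huw]
  have g3 : 0 < det2 t u * det2 w u := by
    nlinarith [mul_nonneg hu.le htw, mul_neg_of_neg_of_pos hut huw]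
  have := mul_pos g2 g3
  nlinarith [mul_nonneg (sq_nonneg (det2 w u)) (neg_pos.2 g1).le]

lemma path_neg {z b u w : ℝ × ℝ} (hzu : dot2 z u < 0) (hzw : 0 ≤ dot2 z w) (hbw : dot2 b w < 0)
    (hbu : 0 ≤ dot2 b u) (huw : 0 < dot2 u w) : dot2 z b < 0 := by
  have hu := dot2_self_pos_of_ne huw.ne'
  have f1 := dot2_frame u z b
  have f2 := dot2_frame u z w
  have f3 := dot2_frame u b w
  rw [dot2_comm w u] at f2 f3
  have g1 : 0 < det2 z u * det2 w u := by
    nlinarith [mul_nonneg hu.le hzw, mul_neg_of_neg_of_pos hzu huw]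
  have g2 : det2 b u * det2 w u < 0 := by
    nlinarith [mul_neg_of_pos_of_neg hu hbw, mul_nonneg hbu huw.le]
  have g3 := mul_neg_of_pos_of_neg g1 g2
  have g4 : det2 z u * det2 b u < 0 := by
    by_contra hc
    push Not at hc
    nlinarith [mul_nonneg hc (sq_nonneg (det2 w u))]
  have g5 : dot2 z u * dot2 b u ≤ 0 := mul_nonpos_of_nonpos_of_nonneg hzu.le hbu
  by_contra hc
  push Not at hc
  nlinarith [mul_nonneg hu.le hc]

/-- If two vectors `y, z` have the same product with `a` and `b`, they agree or `a, b` are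
parallel. -/
lemma perp_alt {y z a b : ℝ × ℝ} (ha : dot2 y a = dot2 z a) (hb : dot2 y b = dot2 z b) :
    y = z ∨ det2 a b = 0 := by
  by_cases h : det2 a b = 0
  · exact Or.inr h
  left
  simp only [dot2, det2] at *
  have h1 : (y.1 - z.1) * (a.1 * b.2 - a.2 * b.1) = 0 := by linear_combination b.2 * ha - a.2 * hb
  have h2 : (y.2 - z.2) * (a.1 * b.2 - a.2 * b.1) = 0 := by linear_combination a.1 * hb - b.1 * ha
  have h1' := (mul_eq_zero.1 h1).resolve_right h
  have h2' := (mul_eq_zero.1 h2).resolve_right h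
  exact Prod.ext (by linarith) (by linarith)

/-- Parallel vectors have proportional products. -/
lemma par_mul {a b : ℝ × ℝ} (h : det2 a b = 0) (y z : ℝ × ℝ) :
    dot2 a y * dot2 b z = dot2 a z * dot2 b y := by
  simp only [dot2, det2] at *
  linear_combination (y.1 * z.2 - y.2 * z.1) * h

/-- A twin of the end of a path. -/
lemma end_twin {v0 v1 v2 v3 z : ℝ × ℝ} {e t : ℝ} (he : 0 < e) (he1 : e ≤ 1)
    (h01 : dot2 v0 v1 = -e) (h02 : dot2 v0 v2 = 1 - e) (h03 : dot2 v0 v3 = 2 - e)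
    (h12 : dot2 v1 v2 = -e) (h13 : dot2 v1 v3 = 1 - e) (h23 : dot2 v2 v3 = -e)
    (hz0 : dot2 z v0 = 1 - e) (hz1 : dot2 z v1 = -e) (hz2 : dot2 z v2 = 1 - e)
    (hz3 : dot2 z v3 = t) (ht : 1 - e ≤ t) : False := by
  rcases perp_alt (hz1.trans h01.symm) (hz2.trans h02.symm) with h | h
  · subst h
    rcases perp_alt (y := z) (z := v2) (a := z) (b := v1) (by rw [hz0, dot2_comm, h02])
      (by rw [hz1, dot2_comm, h12]) with h | h
    · subst h; linarith
    · have := par_mul h v1 v3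
      have h11 := dot2_self_pos_of_ne (a := v1) (b := z) (by rw [dot2_comm, h01]; linarith)
      rw [h01, h13, h03] at this
      nlinarith [mul_pos (show 0 < 2 - e by linarith) h11,
        mul_nonneg he.le (show 0 ≤ 1 - e by linarith)]
  · have p1 := par_mul h z v3
    have p2 := par_mul h v0 v3
    have p3 := par_mul h v1 v2
    have p4 := par_mul h v0 v1
    rw [dot2_comm v1 v0, dot2_comm v2 v0, h01, h23, h13, h02] at p2
    have e2 : e = 1 / 2 := by nlinarith
    subst e2
    rw [dot2_comm v1 v0, dot2_comm v2 v0, dot2_comm v2 v1, h01, h02, h12] at p4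
    have q11 : dot2 v1 v1 = 1 / 2 := by linarith
    have f1 := dot2_frame v1 z v0
    have f2 := dot2_frame v1 v0 v3
    have f3 := dot2_frame v1 z v3
    rw [q11, hz0, hz1, h01] at f1
    rw [q11, h03, h01, dot2_comm v3 v1, h13] at f2
    rw [q11, hz3, hz1, dot2_comm v3 v1, h13] at f3
    have : det2 z v1 * det2 v0 v1 = 0 := by linarith
    rcases mul_eq_zero.1 this with h | h
    · rw [h] at f3; linarith
    · rw [h] at f2; linarith

/-- A twin of an inner vertex of a path. -/
lemma inner_twin {v0 v1 v2 v3 z : ℝ × ℝ} {e : ℝ} (he : 0 < e) (he1 : e ≤ 1)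
    (h01 : dot2 v0 v1 = -e) (h02 : dot2 v0 v2 = 1 - e) (h03 : dot2 v0 v3 = 2 - e)
    (h12 : dot2 v1 v2 = -e) (h13 : dot2 v1 v3 = 1 - e) (h23 : dot2 v2 v3 = -e)
    (hz0 : dot2 z v0 = -e) (hz1 : dot2 z v1 = 1 - e) (hz2 : dot2 z v2 = -e)
    (hz3 : dot2 z v3 = 1 - e) : e = 1 / 2 ∧ ∀ w, dot2 w v2 = - dot2 w v1 := by
  rcases perp_alt (y := z) (z := v1) (a := v0) (b := v3) (by rw [hz0, dot2_comm, h01])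
      (by rw [hz3, h13]) with h | h
  · subst h
    rcases perp_alt (y := z) (z := v3) (a := z) (b := v2) (by rw [hz1, dot2_comm, h13])
      (by rw [hz2, dot2_comm, h23]) with h | h
    · subst h; linarith
    · have p := par_mul h v0 v2
      have p1 := par_mul h v0 z
      rw [hz0, dot2_comm v2 v0, h02, hz2] at p
      rw [hz0, dot2_comm v2 z, dot2_comm v2 v0, h02, hz2, hz1] at p1
      have e2 : e = 1 / 2 := by nlinarith
      refine ⟨e2, fun w => ?_⟩
      have p2 := par_mul h z w
      rw [dot2_comm v2 z, hz1, hz2, e2] at p2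
      rw [dot2_comm w, dot2_comm w]
      linarith
  · have p := par_mul h v3 v2
    have h33 := dot2_self_nonneg v3
    rw [h03, dot2_comm v3, h23, h02] at p
    nlinarith

/-- Two middle vertices. -/
lemma middle_eq {v0 v1 v3 z w : ℝ × ℝ} {e : ℝ} (he : 0 < e) (he1 : e ≤ 1)
    (h01 : dot2 v0 v1 = -e) (h03 : dot2 v0 v3 = 2 - e)
    (h13 : dot2 v1 v3 = 1 - e)
    (hz0 : dot2 z v0 = 1 - e) (hz1 : dot2 z v1 = -e)
    (hw0 : dot2 w v0 = 1 - e) (hw1 : dot2 w v1 = -e) : z = w := by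
  rcases perp_alt (hz0.trans hw0.symm) (hz1.trans hw1.symm) with h | h
  · exact h
  · have p := par_mul h v1 v3
    have h11 := dot2_self_pos_of_ne (a := v1) (b := v0) (by rw [dot2_comm, h01]; linarith)
    rw [h01, h13, h03] at p
    nlinarith [mul_pos (show 0 < 2 - e by linarith) h11,
        mul_nonneg he.le (show 0 ≤ 1 - e by linarith)]

lemma middle_false {v0 v1 v3 z : ℝ × ℝ} {e : ℝ} (he : 0 < e)
    (h01 : dot2 v0 v1 = -e) (h03 : dot2 v0 v3 = 2 - e)
    (h13 : dot2 v1 v3 = 1 - e) 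
    (hz0 : dot2 z v0 = 1 - e) (hz1 : dot2 z v1 = -e)
    (hz3 : dot2 z v3 = 1 - e) (hzz : dot2 z z = 1 - e) : False := by
  rcases perp_alt (y := z) (z := v0) (a := z) (b := v1) (by rw [hzz, dot2_comm, hz0])
      (by rw [hz1, h01]) with h | h
  · subst h; linarith
  · have p := par_mul h z v3
    have hp := dot2_self_pos_of_ne (a := z) (b := v1) (by rw [hz1]; linarith)
    rw [hzz, h13, hz3, dot2_comm v1, hz1] at p
    rw [hzz] at hp
    nlinarith

lemma minor3 (a b c x y z : ℝ × ℝ) :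
    dot2 a x * (dot2 b y * dot2 c z - dot2 b z * dot2 c y)
    - dot2 a y * (dot2 b x * dot2 c z - dot2 b z * dot2 c x)
    + dot2 a z * (dot2 b x * dot2 c y - dot2 b y * dot2 c x) = 0 := by
  simp only [dot2]; ring

lemma far_false {v0 v1 v2 v3 z w : ℝ × ℝ} {e : ℝ} (he : 0 < e) (he1 : e ≤ 1)
    (h01 : dot2 v0 v1 = -e) (h02 : dot2 v0 v2 = 1 - e) (h03 : dot2 v0 v3 = 2 - e)
    (h12 : dot2 v1 v2 = -e) (h13 : dot2 v1 v3 = 1 - e) (h23 : dot2 v2 v3 = -e)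
    (hz0 : dot2 z v0 = 1 - e) (hz1 : dot2 z v1 = -e) (hz2 : dot2 z v2 = -e)
    (hz3 : dot2 z v3 = 1 - e)
    (hw1 : dot2 w v1 = 1 - e) (hw2 : dot2 w v2 = 1 - e) (hwz : dot2 w z = -e) : False := by
  have m := minor3 v1 v2 z v0 v3 w
  rw [dot2_comm v1 v0, dot2_comm v2 v0, dot2_comm v1 w, dot2_comm v2 w, dot2_comm z w,
    h01, h02, h13, h23, hz0, hz3, hw1, hw2, hwz] at m
  have e2 : e = 2 / 3 := by nlinarith
  subst e2
  have m2 := minor3 v0 v1 z v3 v2 z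
  have hzz := dot2_self_nonneg z
  rw [dot2_comm v0 z, dot2_comm v1 z, h03, h02, h13, h12, hz0, hz1, hz3, hz2] at m2
  linarith

/-- Long induced paths. -/
lemma five_path {u v0 v1 v2 v3 : ℝ × ℝ} {f : ℝ} (hf : 0 < f)
    (h01 : dot2 v0 v1 = -1 - f) (h03 : dot2 v0 v3 = 1 - f)
    (h12 : dot2 v1 v2 = -1 - f) (h13 : dot2 v1 v3 = -f) (h23 : dot2 v2 v3 = -1 - f)
    (hu0 : dot2 u v0 = -1 - f) (hu1 : dot2 u v1 = -f) (hu2 : dot2 u v2 = 1 - f) : False := by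
  have m := minor3 v0 v1 v2 u v1 v3
  have h11 := dot2_self_nonneg v1
  rw [dot2_comm v0 u, dot2_comm v1 u, dot2_comm v2 u, dot2_comm v2 v1, h01, h03, h12, h13, h23,
    hu0, hu1, hu2] at m
  nlinarith [mul_nonneg hf.le h11]

lemma gram_of_rank_le_two {n : ℕ} (hn : 2 ≤ n) {N : Matrix (Fin n) (Fin n) ℝ}
    (hN : N.PosSemidef) (hr : N.rank ≤ 2) :
    ∃ x : Fin n → ℝ × ℝ, ∀ i j, N i j = dot2 (x i) (x j) := by
  classical
  have hH := hN.1
  have hsum : ∀ i j, N i j =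
      ∑ k, hH.eigenvalues k * (hH.eigenvectorBasis k i * hH.eigenvectorBasis k j) := by
    intro i j
    conv_lhs => rw [hH.spectral_theorem, Unitary.conjStarAlgAut_apply]
    simp only [Matrix.mul_apply, Matrix.diagonal_apply, Matrix.star_apply]
    refine Finset.sum_congr rfl fun k _ => ?_
    simp
    ring
  rw [hH.rank_eq_card_non_zero_eigs, Fintype.card_subtype] at hr
  obtain ⟨T, hT, hTc⟩ := Finset.exists_superset_card_eq hr (by simpa using hn)
  obtain ⟨a, b, hab, rfl⟩ := Finset.card_eq_two.1 hTc
  refine ⟨fun i => (√(hH.eigenvalues a) * hH.eigenvectorBasis a i,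
    √(hH.eigenvalues b) * hH.eigenvectorBasis b i), fun i j => ?_⟩
  rw [hsum, ← Finset.sum_subset (Finset.subset_univ {a, b})]
  · rw [Finset.sum_pair hab]
    have ha := Real.mul_self_sqrt (hN.eigenvalues_nonneg a)
    have hb := Real.mul_self_sqrt (hN.eigenvalues_nonneg b)
    simp only [dot2]
    linear_combination (-hH.eigenvectorBasis a i * hH.eigenvectorBasis a j) * ha
      - (hH.eigenvectorBasis b i * hH.eigenvectorBasis b j) * hb
  · intro k _ hk
    have : hH.eigenvalues k = 0 := by
      by_contra h
      exact hk (hT (by simp [h]))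
    simp [this]

lemma distLaplacian_symm {n : ℕ} (G : SimpleGraph (Fin n)) (i j : Fin n) :
    distLaplacian G i j = distLaplacian G j i := by
  simp only [distLaplacian, Matrix.of_apply]
  by_cases h : i = j
  · subst h; rfl
  · rw [if_neg h, if_neg (Ne.symm h), SimpleGraph.dist_comm]

lemma distLaplacian_row_sum {n : ℕ} (G : SimpleGraph (Fin n)) (i : Fin n) :
    ∑ j, distLaplacian G i j = 0 := by
  have : ∀ j, distLaplacian G i j =
      (if i = j then ∑ k, (G.dist i k : ℝ) else 0) - (G.dist i j : ℝ) := by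
    intro j
    simp only [distLaplacian, Matrix.of_apply]
    by_cases h : i = j
    · subst h; simp
    · simp [h]
  simp [this]

lemma sum_distLaplacian_mulVec {n : ℕ} (G : SimpleGraph (Fin n)) (v : Fin n → ℝ) :
    ∑ i, (distLaplacian G *ᵥ v) i = 0 := by
  simp only [Matrix.mulVec, dotProduct]
  rw [Finset.sum_comm]
  simp_rw [← Finset.sum_mul]
  have : ∀ j, ∑ i, distLaplacian G i j = 0 := fun j => by
    rw [← distLaplacian_row_sum G j]
    exact Finset.sum_congr rfl fun i _ => distLaplacian_symm G i j
  simp [this]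

theorem exists_gram (n : ℕ) (hn : 6 ≤ n) (G : SimpleGraph (Fin n)) (hG : G.Connected)
    (hmult : eigMult (distLaplacian G) (lambdaMax (distLaplacian G)) = n - 3) :
    ∃ (c : ℝ) (x : Fin n → ℝ × ℝ),
      (∀ i j, i ≠ j → dot2 (x i) (x j) = G.dist i j - c) ∧
      (∀ i, dot2 (x i) (x i) = (n - 1) * c - ∑ k, (G.dist i k : ℝ)) ∧
      (∃ i j, dot2 (x i) (x j) ≠ 0) := by
  classical
  set M := distLaplacian G with hM
  set l := lambdaMax M with hl
  have hn0 : (n : ℝ) ≠ 0 := by positivity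
  set c := l / n with hc
  have hlc : l = n * c := by rw [hc]; field_simp
  set N : Matrix (Fin n) (Fin n) ℝ := Matrix.of fun i j => (if i = j then l else 0) - M i j - c
    with hN
  have hNv : ∀ v i, (N *ᵥ v) i = l * v i - (M *ᵥ v) i - c * ∑ j, v j := by
    intro v i
    simp only [Matrix.mulVec, dotProduct, hN, Matrix.of_apply, sub_mul, Finset.sum_sub_distrib,
      Finset.mul_sum]
    simp
  have hbdd : ∀ μ v, v ≠ 0 → M *ᵥ v = μ • v → μ ≤ l := by
    intro μ v hv h
    apply le_csSup
    · exact (Module.End.finite_hasEigenvalue M.mulVecLin).bddAbove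
    · exact Module.End.hasEigenvalue_of_hasEigenvector (x := v)
        ⟨Module.End.mem_eigenspace_iff.2 (by simpa using h), hv⟩
  have hsumN : ∀ v, ∑ i, (N *ᵥ v) i = 0 := by
    intro v
    simp only [hNv, Finset.sum_sub_distrib, sum_distLaplacian_mulVec, hM, ← Finset.mul_sum]
    simp
    rw [hlc]; ring
  have hHerm : N.IsHermitian := by
    ext i j
    simp only [hN, Matrix.conjTranspose_apply, Matrix.of_apply, star_trivial, hM]
    rw [distLaplacian_symm G j i]
    simp only [eq_comm]
  have hPSD : N.PosSemidef := by
    rw [hHerm.posSemidef_iff_eigenvalues_nonneg]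
    intro k
    by_contra hneg
    simp only [Pi.zero_apply, not_le] at hneg
    have he := hHerm.mulVec_eigenvectorBasis k
    set v : Fin n → ℝ := ⇑(hHerm.eigenvectorBasis k) with hv
    have hv0 : v ≠ 0 := by
      intro h0
      have := hHerm.eigenvectorBasis.orthonormal.ne_zero k
      apply this
      ext i
      exact congrFun h0 i
    have hs : ∑ i, v i = 0 := by
      have h1 := hsumN v
      rw [he] at h1
      simp only [Pi.smul_apply, smul_eq_mul, ← Finset.mul_sum] at h1
      exact (mul_eq_zero.1 h1).resolve_left hneg.ne
    have := hbdd (l - hHerm.eigenvalues k) v hv0 (by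
      ext i
      have h1 := hNv v i
      rw [he, hs] at h1
      simp only [Pi.smul_apply, smul_eq_mul] at h1 ⊢
      linarith)
    linarith
  have hdiag : ∀ i, N i i = (n - 1) * c - ∑ k, (G.dist i k : ℝ) := by
    intro i
    simp only [hN, hM, distLaplacian, Matrix.of_apply, if_true]
    rw [hlc]; ring
  have hoff : ∀ i j, i ≠ j → N i j = G.dist i j - c := by
    intro i j h
    simp [hN, hM, distLaplacian, h]
  have hl0 : l ≠ 0 := by
    intro h0
    have hc0 : c = 0 := by rw [hc, h0]; simp
    let i : Fin n := ⟨0, by omega⟩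
    let j : Fin n := ⟨1, by omega⟩
    have h1 := hPSD.diag_nonneg (i := i)
    rw [hdiag, hc0] at h1
    have h2 : (G.dist i j : ℝ) ≤ ∑ k, (G.dist i k : ℝ) :=
      Finset.single_le_sum (f := fun k => (G.dist i k : ℝ)) (fun k _ => by positivity)
        (Finset.mem_univ j)
    have h3 : 0 < G.dist i j := hG.pos_dist_of_ne (by simp [i, j])
    have h4 : (0 : ℝ) < G.dist i j := by exact_mod_cast h3
    linarith
  set E := Module.End.eigenspace M.mulVecLin l with hE
  have hEr : Module.finrank ℝ E = n - 3 := hmult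
  have hEsum : ∀ v ∈ E, ∑ i, v i = 0 := by
    intro v hv
    have h1 : M *ᵥ v = l • v := by simpa using Module.End.mem_eigenspace_iff.1 hv
    have h2 := sum_distLaplacian_mulVec G v
    rw [← hM, h1] at h2
    simp only [Pi.smul_apply, smul_eq_mul, ← Finset.mul_sum] at h2
    exact (mul_eq_zero.1 h2).resolve_left hl0
  have hone : (1 : Fin n → ℝ) ≠ 0 := by
    intro h
    have := congrFun h ⟨0, by omega⟩
    simp at this
  have hrank : N.rank ≤ 2 := by
    have hle : E ⊔ (ℝ ∙ (1 : Fin n → ℝ)) ≤ LinearMap.ker N.mulVecLin := by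
      refine sup_le ?_ ?_
      · intro v hv
        rw [LinearMap.mem_ker, Matrix.mulVecLin_apply]
        have h1 : M *ᵥ v = l • v := by simpa using Module.End.mem_eigenspace_iff.1 hv
        ext i
        rw [hNv, h1, hEsum v hv]
        simp
      · rw [Submodule.span_singleton_le_iff_mem, LinearMap.mem_ker, Matrix.mulVecLin_apply]
        ext i
        rw [hNv]
        have := distLaplacian_row_sum G i
        simp only [Matrix.mulVec, dotProduct, Pi.one_apply, mul_one, hM, this]
        simp [hlc]; ring
    have hdisj : Disjoint E (ℝ ∙ (1 : Fin n → ℝ)) := by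
      rw [Submodule.disjoint_def]
      intro v hv h1
      obtain ⟨a, rfl⟩ := Submodule.mem_span_singleton.1 h1
      have := hEsum _ hv
      simp [hn0] at this
      simp [this]
    have h1 := Submodule.finrank_mono hle
    have h2 := Submodule.finrank_sup_add_finrank_inf_eq E (ℝ ∙ (1 : Fin n → ℝ))
    rw [hdisj.eq_bot, finrank_bot, finrank_span_singleton hone, hEr] at h2
    have h3 := LinearMap.finrank_range_add_finrank_ker N.mulVecLin
    rw [Module.finrank_fin_fun] at h3
    change Module.finrank ℝ (LinearMap.range N.mulVecLin) ≤ 2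
    omega
  obtain ⟨x, hx⟩ := gram_of_rank_le_two (by omega) hPSD hrank
  refine ⟨c, x, fun i j h => by rw [← hx, hoff i j h], fun i => by rw [← hx, hdiag], ?_⟩
  by_contra hcon
  push Not at hcon
  have hN0 : N = 0 := by
    ext i j
    rw [hx, hcon]; rfl
  let φ : (Fin n → ℝ) →ₗ[ℝ] ℝ := ∑ i, LinearMap.proj i
  have hφ : LinearMap.ker φ ≤ E := by
    intro v hv
    have hs : ∑ i, v i = 0 := by simpa [φ] using hv
    rw [hE, Module.End.mem_eigenspace_iff, Matrix.mulVecLin_apply]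
    ext i
    have h1 := hNv v i
    rw [hN0, hs] at h1
    simp at h1 ⊢
    linarith
  have h1 := Submodule.finrank_mono hφ
  have h3 := LinearMap.finrank_range_add_finrank_ker φ
  have h4 := Submodule.finrank_le (LinearMap.range φ)
  rw [Module.finrank_fin_fun] at h3
  rw [Module.finrank_self] at h4
  omega

/-- The set-up of the planar configuration. -/
structure Config (n : ℕ) (G : SimpleGraph (Fin n)) (c : ℝ) (x : Fin n → ℝ × ℝ) : Prop where
  conn : G.Connected
  off : ∀ i j, i ≠ j → dot2 (x i) (x j) = G.dist i j - c
  diag : ∀ i, dot2 (x i) (x i) = (n - 1) * c - ∑ k, (G.dist i k : ℝ)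

/-- A geodesic with four vertices. -/
structure Geo {n : ℕ} (G : SimpleGraph (Fin n)) (v0 v1 v2 v3 : Fin n) : Prop where
  d01 : G.dist v0 v1 = 1
  d02 : G.dist v0 v2 = 2
  d03 : G.dist v0 v3 = 3
  d12 : G.dist v1 v2 = 1
  d13 : G.dist v1 v3 = 2
  d23 : G.dist v2 v3 = 1

lemma Geo.symm {n : ℕ} {G : SimpleGraph (Fin n)} {v0 v1 v2 v3 : Fin n} (h : Geo G v0 v1 v2 v3) :
    Geo G v3 v2 v1 v0 := by
  constructor <;> rw [SimpleGraph.dist_comm]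
  exacts [h.d23, h.d13, h.d03, h.d12, h.d02, h.d01]

lemma exists_prev {n : ℕ} {G : SimpleGraph (Fin n)} (hG : G.Connected) (u w : Fin n) (k : ℕ)
    (h : G.dist u w = k + 1) : ∃ y, G.dist u y = k ∧ G.dist y w = 1 := by
  obtain ⟨p, hp⟩ := hG.exists_walk_length_eq_dist w u
  rw [SimpleGraph.dist_comm, h] at hp
  cases p with
  | nil => simp at hp
  | @cons _ y _ ha q =>
    refine ⟨y, ?_, by rw [SimpleGraph.dist_eq_one_iff_adj]; exact ha.symm⟩
    have h1 : G.dist y u ≤ q.length := SimpleGraph.dist_le q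
    have h2 : q.length = k := by simpa using hp
    have h3 : G.dist u w ≤ G.dist u y + G.dist y w := hG.dist_triangle
    have h4 : G.dist y w = 1 := by rw [SimpleGraph.dist_eq_one_iff_adj]; exact ha.symm
    rw [SimpleGraph.dist_comm] at h1
    omega

lemma exists_geo {n : ℕ} {G : SimpleGraph (Fin n)} (hG : G.Connected) (u w : Fin n)
    (h : 3 ≤ G.dist u w) : ∃ v0 v1 v2 v3, Geo G v0 v1 v2 v3 := by
  have key : ∀ m (w : Fin n), G.dist u w = 3 + m → ∃ w', G.dist u w' = 3 := by
    intro m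
    induction m with
    | zero => exact fun w hw => ⟨w, hw⟩
    | succ m ih =>
      intro w hw
      obtain ⟨y, hy, -⟩ := exists_prev hG u w (3 + m) (by omega)
      exact ih y hy
  obtain ⟨v3, h3⟩ := key (G.dist u w - 3) w (by omega)
  obtain ⟨v2, h2, h23⟩ := exists_prev hG u v3 2 h3
  obtain ⟨v1, h1, h12⟩ := exists_prev hG u v2 1 h2
  have t1 : G.dist u v3 ≤ G.dist u v1 + G.dist v1 v3 := hG.dist_triangle
  have t2 : G.dist v1 v3 ≤ G.dist v1 v2 + G.dist v2 v3 := hG.dist_triangle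
  exact ⟨u, v1, v2, v3, h1, h2, h3, h12, by omega, h23⟩

section
variable {n : ℕ} {G : SimpleGraph (Fin n)} {c : ℝ} {x : Fin n → ℝ × ℝ}

lemma Config.offd (C : Config n G c x) {i j : Fin n} {d : ℕ} (h : G.dist i j = d) (hd : d ≠ 0) :
    dot2 (x i) (x j) = d - c := by
  rw [C.off i j (by rintro rfl; simp at h; omega), h]

lemma Config.one_lt (C : Config n G c x) (hn : 6 ≤ n) {u w : Fin n} (h : 2 ≤ G.dist u w) :
    1 < c := by
  have h1 := dot2_self_nonneg (x u)
  rw [C.diag] at h1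
  have h2 : (n : ℝ) - 1 + 1 ≤ ∑ k, (G.dist u k : ℝ) := by
    have huw : u ≠ w := by rintro rfl; simp at h
    have : ∀ k, (if k = u then (0 : ℝ) else 1) + (if k = w then 1 else 0) ≤ G.dist u k := by
      intro k
      by_cases hk : k = u
      · subst hk; simp [huw]
      · have h3 : 1 ≤ G.dist u k := C.conn.pos_dist_of_ne (Ne.symm hk)
        have h3' : (1 : ℝ) ≤ G.dist u k := by exact_mod_cast h3
        by_cases hw : k = w
        · subst hw
          have h' : (2 : ℝ) ≤ G.dist u k := by exact_mod_cast h
          simp [hk]; linarith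
        · simp [hk, hw]; exact_mod_cast h3
    have hs := Finset.sum_le_sum fun k (_ : k ∈ Finset.univ) => this k
    rw [Finset.sum_add_distrib] at hs
    have e1 : ∑ k : Fin n, (if k = u then (0 : ℝ) else 1) = n - 1 := by
      have : ∀ k : Fin n, (if k = u then (0 : ℝ) else 1) = 1 - if k = u then 1 else 0 := by
        intro k; split_ifs <;> norm_num
      simp [this]
    rw [e1] at hs
    simpa using hs
  have h3 : (6 : ℝ) ≤ n := by exact_mod_cast hn
  nlinarith

lemma exists_exit (hG : G.Connected) (S : Finset (Fin n)) (hS : S.Nonempty) (hc : S.card < n) :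
    ∃ a ∈ S, ∃ w ∉ S, G.dist a w = 1 := by
  obtain ⟨a, ha⟩ := hS
  obtain ⟨b, hb⟩ : ∃ b, b ∉ S := by
    by_contra h
    push Not at h
    have : S = Finset.univ := Finset.eq_univ_iff_forall.2 h
    rw [this] at hc
    simp at hc
  obtain ⟨p⟩ := hG.preconnected a b
  obtain ⟨d, -, h1, h2⟩ := p.exists_boundary_dart (S : Set (Fin n)) (by simpa using ha)
    (by simpa using hb)
  exact ⟨d.fst, by simpa using h1, d.snd, by simpa using h2, SimpleGraph.dist_eq_one_iff_adj.2 d.adj⟩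

/-- Four pairwise close vertices cannot exist when `c > 2`. -/
lemma Config.no_four (C : Config n G c x) {k : ℕ} (hc : (k : ℝ) < c) {a b d e : Fin n} (hab : a ≠ b)
    (had : a ≠ d) (hae : a ≠ e) (hbd : b ≠ d) (hbe : b ≠ e) (hde : d ≠ e)
    (dab : G.dist a b ≤ k) (dad : G.dist a d ≤ k) (dae : G.dist a e ≤ k) (dbd : G.dist b d ≤ k)
    (dbe : G.dist b e ≤ k) (dde : G.dist d e ≤ k) : False := by
  have key : ∀ i j, i ≠ j → G.dist i j ≤ k → dot2 (x i) (x j) < 0 := by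
    intro i j h hd
    rw [C.off i j h]
    have : (G.dist i j : ℝ) ≤ k := by exact_mod_cast hd
    linarith
  exact four_neg (key _ _ hab dab) (key _ _ had dad) (key _ _ hae dae) (key _ _ hbd dbd)
    (key _ _ hbe dbe) (key _ _ hde dde)

lemma Config.deg_le_two (C : Config n G c x) (hc : 2 < c) {a b d e : Fin n} (hb : G.dist a b = 1)
    (hd : G.dist a d = 1) (he : G.dist a e = 1) (hbd : b ≠ d) (hbe : b ≠ e) (hde : d ≠ e) :
    False := by
  have t : ∀ i j, G.dist a i = 1 → G.dist a j = 1 → G.dist i j ≤ 2 := by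
    intro i j hi hj
    have : G.dist i j ≤ G.dist i a + G.dist a j := C.conn.dist_triangle
    rw [SimpleGraph.dist_comm (u := i) (v := a)] at this
    omega
  have ne : ∀ i, G.dist a i = 1 → a ≠ i := by
    rintro i h rfl
    simp at h
  exact C.no_four (k := 2) (by exact_mod_cast hc) (ne _ hb) (ne _ hd) (ne _ he) hbd hbe hde
    (by omega) (by omega) (by omega) (t _ _ hb hd) (t _ _ hb he) (t _ _ hd he)

/-- Extension of a geodesic at its beginning when `c > 2`. -/
lemma Config.extend_false (C : Config n G c x) (hc : 2 < c) {v0 v1 v2 v3 w : Fin n}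
    (g : Geo G v0 v1 v2 v3) (hw : G.dist v0 w = 1) (hw1 : w ≠ v1) : False := by
  have dc : ∀ i j, G.dist i j = G.dist j i := fun i j => SimpleGraph.dist_comm
  have tri : ∀ i j k, G.dist i k ≤ G.dist i j + G.dist j k := fun i j k => C.conn.dist_triangle
  have pos : ∀ i j, G.dist i j = 0 → i = j := fun i j h => C.conn.dist_eq_zero_iff.1 h
  obtain ⟨d01, d02, d03, d12, d13, d23⟩ := g
  have ne : ∀ i j, G.dist i j ≠ 0 → i ≠ j := by
    rintro i j h rfl
    simp at h
  have h02 : v0 ≠ v2 := ne _ _ (by omega)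
  have w0 : G.dist w v0 = 1 := by rw [dc, hw]
  have hwv2 : w ≠ v2 := by rintro rfl; omega
  have hw1' : G.dist w v1 = 2 := by
    have a1 := tri w v0 v1
    have a2 : G.dist w v1 ≠ 0 := fun h => hw1 (pos _ _ h)
    have a3 : G.dist w v1 ≠ 1 := by
      intro h
      exact C.deg_le_two hc (a := v1) (b := v0) (d := v2) (e := w) (by rw [dc, d01]) d12
        (by rw [dc, h]) h02 (ne _ _ (by omega)) (Ne.symm hwv2)
    omega
  have hw2 : G.dist w v2 = 3 := by
    have a1 := tri w v0 v2
    have a2 : G.dist w v2 ≠ 0 := fun h => hwv2 (pos _ _ h)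
    have adj2 : ∀ y, G.dist y v2 = 1 → y = v1 ∨ y = v3 := by
      intro y hy
      by_contra hcon
      push Not at hcon
      exact C.deg_le_two hc (a := v2) (b := v1) (d := v3) (e := y) (by rw [dc, d12]) d23
        (by rw [dc, hy]) (ne _ _ (by omega)) hcon.1.symm hcon.2.symm
    have a3 : G.dist w v2 ≠ 1 := by
      intro h
      rcases adj2 w h with h | h
      · exact hw1 h
      · subst h; omega
    have a4 : G.dist w v2 ≠ 2 := by
      intro h
      obtain ⟨y, hy1, hy2⟩ := exists_prev C.conn w v2 1 h
      rcases adj2 y hy2 with h | h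
      · subst h; omega
      · subst h
        have := tri v0 w y
        omega
    omega
  have h01 := C.offd d01 (by norm_num)
  have h03 := C.offd d03 (by norm_num)
  have h12 := C.offd d12 (by norm_num)
  have h13 := C.offd d13 (by norm_num)
  have h23 := C.offd d23 (by norm_num)
  have k0 := C.offd w0 (by norm_num)
  have k1 := C.offd hw1' (by norm_num)
  have k2 := C.offd hw2 (by norm_num)
  push_cast at *
  exact five_path (f := c - 2) (by linarith) (h01.trans (by ring)) (h03.trans (by ring))
    (h12.trans (by ring)) (h13.trans (by ring)) (h23.trans (by ring)) (k0.trans (by ring))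
    (k1.trans (by ring)) (k2.trans (by ring))

lemma Config.large_false (C : Config n G c x) (hn : 6 ≤ n) (hc : 2 < c) {v0 v1 v2 v3 : Fin n}
    (g : Geo G v0 v1 v2 v3) : False := by
  have dc : ∀ i j, G.dist i j = G.dist j i := fun i j => SimpleGraph.dist_comm
  have ne : ∀ i j, G.dist i j ≠ 0 → i ≠ j := by
    rintro i j h rfl
    simp at h
  obtain ⟨a, ha, w, hw, haw⟩ := exists_exit C.conn {v0, v1, v2, v3} ⟨v0, by simp⟩
    (lt_of_le_of_lt Finset.card_le_four (by omega))
  simp only [Finset.mem_insert, Finset.mem_singleton, not_or] at ha hw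
  obtain ⟨hw0, hw1, hw2, hw3⟩ := hw
  have n02 : v0 ≠ v2 := ne _ _ (by rw [g.d02]; norm_num)
  have n13 : v1 ≠ v3 := ne _ _ (by rw [g.d13]; norm_num)
  rcases ha with rfl | rfl | rfl | rfl
  · exact C.extend_false hc g haw hw1
  · exact C.deg_le_two hc (by rw [dc, g.d01]) g.d12 haw n02 (Ne.symm hw0) (Ne.symm hw2)
  · exact C.deg_le_two hc (by rw [dc, g.d12]) g.d23 haw n13 (Ne.symm hw1) (Ne.symm hw3)
  · exact C.extend_false hc g.symm haw hw2

/-- Neighbours of the first vertex when `c ≤ 2`. -/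
lemma Config.local_zero (C : Config n G c x) (hc1 : 1 < c) (hc2 : c ≤ 2) {v0 v1 v2 v3 z : Fin n}
    (g : Geo G v0 v1 v2 v3) (h0 : G.dist z v0 = 1) (hz1 : z ≠ v1) :
    (G.dist z v1 = 2 ∧ G.dist z v2 = 1 ∧ G.dist z v3 = 2) ∧ c = 3 / 2 ∧
      ∀ w, dot2 w (x v2) = - dot2 w (x v1) := by
  have tri : ∀ i j k, G.dist i k ≤ G.dist i j + G.dist j k := fun i j k => C.conn.dist_triangle
  have dc : ∀ i j, G.dist i j = G.dist j i := fun i j => SimpleGraph.dist_comm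
  obtain ⟨d01, d02, d03, d12, d13, d23⟩ := g
  have pos : ∀ i j, G.dist i j = 0 → i = j := fun i j h => C.conn.dist_eq_zero_iff.1 h
  have k01 := C.offd d01 (by norm_num)
  have k02 := C.offd d02 (by norm_num)
  have k03 := C.offd d03 (by norm_num)
  have k12 := C.offd d12 (by norm_num)
  have k13 := C.offd d13 (by norm_num)
  have k23 := C.offd d23 (by norm_num)
  have kz0 := C.offd h0 (by norm_num)
  push_cast at k01 k02 k03 k12 k13 k23 kz0
  have z3 : 2 ≤ G.dist z v3 := by
    have := tri v0 z v3
    rw [dc v0 z] at this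
    omega
  have z3' : (2 : ℝ) ≤ G.dist z v3 := by exact_mod_cast z3
  have kz3 := C.off z v3 (by rintro rfl; simp at z3)
  have z1 : G.dist z v1 = 2 := by
    have a1 := tri z v0 v1
    have a2 : G.dist z v1 ≠ 0 := fun h => hz1 (pos _ _ h)
    have a3 : G.dist z v1 ≠ 1 := by
      intro h
      have kz1 := C.offd h (by norm_num)
      push_cast at kz1
      rw [dot2_comm] at kz0 kz1
      exact three_neg (u := x v0) (v := x v1) (t := x z) (w := x v3) (by linarith) (by linarith)
        (by linarith) (by linarith) (by linarith) (by linarith)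
    omega
  have z2 : G.dist z v2 = 1 := by
    have a2 : z ≠ v2 := by rintro rfl; rw [dc] at h0; omega
    have kz2 := C.off z v2 a2
    have := path_neg (z := x z) (b := x v2) (u := x v0) (w := x v3) (by linarith) (by linarith)
      (by linarith) (by rw [dot2_comm]; linarith) (by linarith)
    rw [kz2] at this
    have h3 : (G.dist z v2 : ℝ) < 2 := by linarith
    have h4 : G.dist z v2 < 2 := by exact_mod_cast h3
    have h5 : G.dist z v2 ≠ 0 := fun h => a2 (pos _ _ h)
    omega
  have z3e : G.dist z v3 = 2 := by
    have := tri z v2 v3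
    omega
  rw [z3e] at kz3
  have kz1 := C.offd z1 (by norm_num)
  have kz2 := C.offd z2 (by norm_num)
  push_cast at kz1 kz2 kz3
  have := inner_twin (v0 := x v0) (v1 := x v1) (v2 := x v2) (v3 := x v3) (z := x z) (e := c - 1)
    (by linarith) (by linarith) (by linarith) (by linarith) (by linarith) (by linarith)
    (by linarith) (by linarith) (by linarith) (by linarith) (by linarith) (by linarith)
  exact ⟨⟨z1, z2, z3e⟩, by linarith [this.1], this.2⟩

/-- Neighbours of the second vertex when `c ≤ 2`. -/
lemma Config.local_one (C : Config n G c x) (hc1 : 1 < c) (hc2 : c ≤ 2) {v0 v1 v2 v3 z : Fin n}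
    (g : Geo G v0 v1 v2 v3) (h1 : G.dist z v1 = 1) (hz0 : G.dist z v0 ≠ 1) (hz3 : G.dist z v3 ≠ 1)
    (n0 : z ≠ v0) (n2 : z ≠ v2) :
    G.dist z v0 = 2 ∧ G.dist z v1 = 1 ∧ G.dist z v2 = 1 ∧ G.dist z v3 = 2 := by
  have tri : ∀ i j k, G.dist i k ≤ G.dist i j + G.dist j k := fun i j k => C.conn.dist_triangle
  have dc : ∀ i j, G.dist i j = G.dist j i := fun i j => SimpleGraph.dist_comm
  obtain ⟨d01, d02, d03, d12, d13, d23⟩ := g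
  have pos : ∀ i j, G.dist i j = 0 → i = j := fun i j h => C.conn.dist_eq_zero_iff.1 h
  have n3 : z ≠ v3 := by rintro rfl; rw [dc] at h1; omega
  have p0 : G.dist z v0 ≠ 0 := fun h => n0 (pos _ _ h)
  have p2 : G.dist z v2 ≠ 0 := fun h => n2 (pos _ _ h)
  have p3 : G.dist z v3 ≠ 0 := fun h => n3 (pos _ _ h)
  have z0 : G.dist z v0 = 2 := by
    have := tri z v1 v0
    rw [dc v1 v0] at this
    omega
  have z2 : G.dist z v2 = 1 := by
    by_contra hne
    have t2 := tri z v1 v2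
    have z2 : G.dist z v2 = 2 := by omega
    have k01 := C.offd d01 (by norm_num)
    have k02 := C.offd d02 (by norm_num)
    have k03 := C.offd d03 (by norm_num)
    have k12 := C.offd d12 (by norm_num)
    have k13 := C.offd d13 (by norm_num)
    have k23 := C.offd d23 (by norm_num)
    have kz0 := C.offd z0 (by norm_num)
    have kz1 := C.offd h1 (by norm_num)
    have kz2 := C.offd z2 (by norm_num)
    have kz3 := C.off z v3 n3
    push_cast at k01 k02 k03 k12 k13 k23 kz0 kz1 kz2
    have z3 : (2 : ℝ) ≤ G.dist z v3 := by
      have : 2 ≤ G.dist z v3 := by omega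
      exact_mod_cast this
    exact end_twin (v0 := x v0) (v1 := x v1) (v2 := x v2) (v3 := x v3) (z := x z) (e := c - 1)
      (by linarith) (by linarith) (by linarith) (by linarith) (by linarith) (by linarith)
      (by linarith) (by linarith) (by linarith) (by linarith) (by linarith) kz3 (by linarith)
  refine ⟨z0, h1, z2, ?_⟩
  have := tri z v2 v3
  omega

/-- Types of the vertices attached to the geodesic when `c ≤ 2`. -/
lemma Config.local_all (C : Config n G c x) (hc1 : 1 < c) (hc2 : c ≤ 2) {v0 v1 v2 v3 z a : Fin n}
    (g : Geo G v0 v1 v2 v3) (n0 : z ≠ v0) (n1 : z ≠ v1) (n2 : z ≠ v2) (n3 : z ≠ v3)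
    (ha : a = v0 ∨ a = v1 ∨ a = v2 ∨ a = v3) (hz : G.dist z a = 1) :
    (G.dist z v0 + G.dist z v3 = 3 ∧ c = 3 / 2 ∧ ∀ w, dot2 w (x v2) = - dot2 w (x v1)) ∨
    (G.dist z v0 = 2 ∧ G.dist z v1 = 1 ∧ G.dist z v2 = 1 ∧ G.dist z v3 = 2) := by
  by_cases z0 : G.dist z v0 = 1
  · left
    obtain ⟨⟨h1, h2, h3⟩, h4, h5⟩ := C.local_zero hc1 hc2 g z0 n1
    exact ⟨by omega, h4, h5⟩
  by_cases z3 : G.dist z v3 = 1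
  · left
    obtain ⟨⟨h1, h2, h3⟩, h4, h5⟩ := C.local_zero hc1 hc2 g.symm z3 n2
    exact ⟨by omega, h4, fun w => by rw [h5 w]; ring⟩
  right
  rcases ha with rfl | rfl | rfl | rfl
  · exact absurd hz z0
  · exact C.local_one hc1 hc2 g hz z0 z3 n0 n2
  · obtain ⟨h1, h2, h3, h4⟩ := C.local_one hc1 hc2 g.symm hz z3 z0 n3 n1
    exact ⟨h4, h3, h2, h1⟩
  · exact absurd hz z3

lemma Config.opp_false (C : Config n G c x) (hc : c = 3 / 2) {v0 v1 v2 v3 : Fin n}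
    (g : Geo G v0 v1 v2 v3) (hopp : ∀ w, dot2 w (x v2) = - dot2 w (x v1)) : False := by
  have dc : ∀ i j, G.dist i j = G.dist j i := fun i j => SimpleGraph.dist_comm
  have ne : ∀ i j, G.dist i j ≠ 0 → i ≠ j := by
    rintro i j h rfl
    simp at h
  have pos : ∀ i j, i ≠ j → G.dist i j ≠ 0 := fun i j h h' => h (C.conn.dist_eq_zero_iff.1 h')
  have key : ∀ z, G.dist v0 z + G.dist v3 z = 3 := by
    intro z
    by_cases n0 : z = v0
    · subst n0; rw [dc v3, g.d03]; simp
    by_cases n3 : z = v3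
    · subst n3; rw [g.d03]; simp
    by_cases n1 : z = v1
    · subst n1; rw [g.d01, dc, g.d13]
    by_cases n2 : z = v2
    · subst n2; rw [g.d02, dc, g.d23]
    have h1 := hopp (x z)
    rw [C.off _ _ n2, C.off _ _ n1, hc] at h1
    have h2 : (G.dist z v1 : ℝ) + G.dist z v2 = 3 := by linarith
    have h3 : G.dist z v1 + G.dist z v2 = 3 := by exact_mod_cast h2
    have p1 := pos _ _ n1
    have p2 := pos _ _ n2
    have : ∃ a, (a = v0 ∨ a = v1 ∨ a = v2 ∨ a = v3) ∧ G.dist z a = 1 := by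
      by_cases h : G.dist z v1 = 1
      · exact ⟨v1, by simp, h⟩
      · exact ⟨v2, by simp, by omega⟩
    obtain ⟨a, ha, hz⟩ := this
    rcases C.local_all (by linarith) (by linarith) g n0 n1 n2 n3 ha hz with h | h
    · rw [dc v0, dc v3]; exact h.1
    · omega
  have s0 := dot2_self_nonneg (x v0)
  have s3 := dot2_self_nonneg (x v3)
  rw [C.diag] at s0 s3
  have hs : ∑ k, (G.dist v0 k : ℝ) + ∑ k, (G.dist v3 k : ℝ) = 3 * n := by
    rw [← Finset.sum_add_distrib]
    have : ∀ k, (G.dist v0 k : ℝ) + G.dist v3 k = 3 := fun k => by exact_mod_cast key k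
    simp [this]
    ring
  rw [hc] at s0 s3
  linarith

lemma Config.small_false (C : Config n G c x) (hn : 6 ≤ n) (hc1 : 1 < c) (hc2 : c ≤ 2)
    {v0 v1 v2 v3 : Fin n} (g : Geo G v0 v1 v2 v3) : False := by
  have dc : ∀ i j, G.dist i j = G.dist j i := fun i j => SimpleGraph.dist_comm
  have tri : ∀ i j k, G.dist i k ≤ G.dist i j + G.dist j k := fun i j k => C.conn.dist_triangle
  have pos : ∀ i j, i ≠ j → G.dist i j ≠ 0 := fun i j h h' => h (C.conn.dist_eq_zero_iff.1 h')
  have loc : ∀ z a, z ≠ v0 → z ≠ v1 → z ≠ v2 → z ≠ v3 → (a = v0 ∨ a = v1 ∨ a = v2 ∨ a = v3) →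
      G.dist a z = 1 →
      (G.dist z v0 = 2 ∧ G.dist z v1 = 1 ∧ G.dist z v2 = 1 ∧ G.dist z v3 = 2) := by
    intro z a n0 n1 n2 n3 ha hz
    rcases C.local_all hc1 hc2 g n0 n1 n2 n3 ha (by rw [dc, hz]) with h | h
    · exact (C.opp_false h.2.1 g h.2.2).elim
    · exact h
  obtain ⟨a, ha, z, hz, haz⟩ := exists_exit C.conn {v0, v1, v2, v3} ⟨v0, by simp⟩
    (lt_of_le_of_lt Finset.card_le_four (by omega))
  simp only [Finset.mem_insert, Finset.mem_singleton, not_or] at ha hz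
  obtain ⟨n0, n1, n2, n3⟩ := hz
  obtain ⟨z0, z1, z2, z3⟩ := loc z a n0 n1 n2 n3 ha haz
  obtain ⟨b, hb, w, hw, hbw⟩ := exists_exit C.conn {z, v0, v1, v2, v3} ⟨v0, by simp⟩
    (lt_of_le_of_lt Finset.card_le_five (by omega))
  simp only [Finset.mem_insert, Finset.mem_singleton, not_or] at hb hw
  obtain ⟨m, m0, m1, m2, m3⟩ := hw
  have k01 := C.offd g.d01 (by norm_num)
  have k02 := C.offd g.d02 (by norm_num)
  have k03 := C.offd g.d03 (by norm_num)
  have k12 := C.offd g.d12 (by norm_num)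
  have k13 := C.offd g.d13 (by norm_num)
  have k23 := C.offd g.d23 (by norm_num)
  have kz0 := C.offd z0 (by norm_num)
  have kz1 := C.offd z1 (by norm_num)
  have kz2 := C.offd z2 (by norm_num)
  have kz3 := C.offd z3 (by norm_num)
  push_cast at k01 k02 k03 k12 k13 k23 kz0 kz1 kz2 kz3
  by_cases hadj : ∃ b, (b = v0 ∨ b = v1 ∨ b = v2 ∨ b = v3) ∧ G.dist b w = 1
  · obtain ⟨b, hb, hbw⟩ := hadj
    obtain ⟨w0, w1, w2, w3⟩ := loc w b m0 m1 m2 m3 hb hbw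
    have kw0 := C.offd w0 (by norm_num)
    have kw1 := C.offd w1 (by norm_num)
    push_cast at kw0 kw1
    have heq : x z = x w := middle_eq (v0 := x v0) (v1 := x v1) (v3 := x v3) (e := c - 1)
      (by linarith) (by linarith) (by linarith) (by linarith) (by linarith) (by linarith)
      (by linarith) (by linarith) (by linarith)
    have kzw := C.off z w (Ne.symm m)
    have t := tri z v1 w
    rw [dc v1 w] at t
    have hp := dot2_self_nonneg (x z)
    rw [← heq] at kzw
    rw [kzw] at hp
    have h1 : (1 : ℝ) < G.dist z w := by linarith
    have h2 : 1 < G.dist z w := by exact_mod_cast h1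
    have h3 : G.dist z w = 2 := by omega
    rw [h3] at kzw
    push_cast at kzw
    exact middle_false (v0 := x v0) (v1 := x v1) (v3 := x v3) (z := x z) (e := c - 1)
      (by linarith) (by linarith) (by linarith) (by linarith) (by linarith)
      (by linarith) (by linarith) (by linarith)
  · push Not at hadj
    rcases hb with rfl | hb
    · have q1 : G.dist w v1 = 2 := by
        have := tri w b v1
        rw [dc w b] at this
        have h1 := hadj v1 (by simp)
        rw [dc] at h1
        have := pos _ _ m1
        omega
      have q2 : G.dist w v2 = 2 := by
        have := tri w b v2
        rw [dc w b] at this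
        have h1 := hadj v2 (by simp)
        rw [dc] at h1
        have := pos _ _ m2
        omega
      rw [dc] at hbw
      have kw1 := C.offd q1 (by norm_num)
      have kw2 := C.offd q2 (by norm_num)
      have kwb := C.offd hbw (by norm_num)
      push_cast at kw1 kw2 kwb
      exact far_false (v0 := x v0) (v1 := x v1) (v2 := x v2) (v3 := x v3) (z := x b) (w := x w)
        (e := c - 1) (by linarith) (by linarith) (by linarith) (by linarith) (by linarith)
        (by linarith) (by linarith) (by linarith) (by linarith) (by linarith) (by linarith)
        (by linarith) (by linarith) (by linarith) (by linarith)
    · exact hadj b hb hbw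

lemma Config.complete_false (C : Config n G c x) (hn : 6 ≤ n)
    (hne : ∃ i j, dot2 (x i) (x j) ≠ 0) (h : ∀ i j, G.dist i j ≤ 1) : False := by
  have hd : ∀ i j, i ≠ j → G.dist i j = 1 := by
    intro i j hij
    have := C.conn.pos_dist_of_ne hij
    have := h i j
    omega
  have hdiag : ∀ i, dot2 (x i) (x i) = (n - 1) * (c - 1) := by
    intro i
    have : ∀ k, (G.dist i k : ℝ) = 1 - if i = k then 1 else 0 := by
      intro k
      by_cases hk : i = k
      · subst hk; simp
      · simp [hk, hd i k hk]
    rw [C.diag]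
    simp [this]
    ring
  have hn' : (6 : ℝ) ≤ n := by exact_mod_cast hn
  have h0 := dot2_self_nonneg (x ⟨0, by omega⟩)
  rw [hdiag] at h0
  have hc : 1 ≤ c := by nlinarith
  rcases hc.lt_or_eq with hc | hc
  · exact C.no_four (k := 1) (a := ⟨0, by omega⟩) (b := ⟨1, by omega⟩) (d := ⟨2, by omega⟩)
      (e := ⟨3, by omega⟩) (by exact_mod_cast hc) (by simp) (by simp) (by simp) (by simp)
      (by simp) (by simp) (h _ _) (h _ _) (h _ _) (h _ _) (h _ _) (h _ _)
  · obtain ⟨i, j, hij⟩ := hne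
    apply hij
    by_cases e : i = j
    · subst e; rw [hdiag, ← hc]; ring
    · rw [C.off _ _ e, hd _ _ e, ← hc]; simp

end

/-- If `G` is a connected graph on `n ≥ 6` vertices whose largest distance
Laplacian eigenvalue has multiplicity `n - 3`, then the diameter of `G` equals `2`. -/
theorem diam_eq_two_of_multiplicity_eq_sub_three
    (n : ℕ) (hn : 6 ≤ n) (G : SimpleGraph (Fin n)) (hG : G.Connected)
    (hmult : eigMult (distLaplacian G) (lambdaMax (distLaplacian G)) = n - 3) :
    G.diam = 2 := by
  obtain ⟨c, x, hoff, hdiag, hne⟩ := exists_gram n hn G hG hmult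
  have C : Config n G c x := ⟨hG, hoff, hdiag⟩
  haveI : Nonempty (Fin n) := ⟨⟨0, by omega⟩⟩
  obtain ⟨u, w, huw⟩ := G.exists_dist_eq_diam
  have hle : ∀ i j, G.dist i j ≤ G.diam := fun i j =>
    SimpleGraph.dist_le_diam (SimpleGraph.connected_iff_ediam_ne_top.1 hG)
  have h1 : ¬ G.diam ≤ 1 := fun h => C.complete_false hn hne fun i j => (hle i j).trans h
  have h2 : ¬ 3 ≤ G.diam := by
    intro h
    obtain ⟨v0, v1, v2, v3, g⟩ := exists_geo hG u w (by omega)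
    have hc1 : 1 < c := C.one_lt hn (u := u) (w := w) (by omega)
    rcases le_or_gt c 2 with hc | hc
    · exact C.small_false hn hc1 hc g
    · exact C.large_false hn hc g
  omega
end

section
/- Let n ≥ 6 be an integer and let G be a connected simple graph on n vertices such that the multiplicity of the largest distance Laplacian eigenvalue ∂L_1 of G equals n−3. Then ∂L_1 ≥ max_{v∈V(G)} Tr(v) + 2. Furthermore, if there exists a vertex v_0 with ∂L_1 = Tr(v_0) + 2, then Tr(v_0) = max_{v∈V(G)} Tr(v). -/
open Matrix

open Polynomial in
lemma minpoly_pow_dvd_of_rootMult (l : ℝ) (hl : IsIntegral ℚ l) (k : ℕ) :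
    ∀ f : ℚ[X], (X - C l) ^ k ∣ f.map (algebraMap ℚ ℝ) → (minpoly ℚ l) ^ k ∣ f := by
  induction k with
  | zero => intro f _; simp
  | succ k ih =>
    intro f hf
    have hroot : aeval l f = 0 := by
      have h1 : (X - C l) ∣ f.map (algebraMap ℚ ℝ) :=
        (dvd_pow_self _ (Nat.succ_ne_zero k)).trans hf
      rw [dvd_iff_isRoot] at h1
      rwa [aeval_def, ← eval_map]
    obtain ⟨g, hg⟩ := minpoly.dvd ℚ l hroot
    have hp : (X - C l) ∣ (minpoly ℚ l).map (algebraMap ℚ ℝ) := by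
      rw [dvd_iff_isRoot, IsRoot, eval_map, ← aeval_def, minpoly.aeval]
    obtain ⟨r, hr⟩ := hp
    have hsep : ((minpoly ℚ l).map (algebraMap ℚ ℝ)).Separable :=
      (minpoly.irreducible hl).separable.map
    have hcop : IsCoprime (X - C l) r := by
      rw [hr] at hsep
      exact hsep.isCoprime
    have h2 : (X - C l) ^ k ∣ g.map (algebraMap ℚ ℝ) := by
      rw [hg, Polynomial.map_mul, hr, pow_succ', mul_assoc] at hf
      have h3 := (mul_dvd_mul_iff_left (X_sub_C_ne_zero l)).1 hf
      exact (hcop.pow_left).dvd_of_dvd_mul_left h3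
    rw [hg, pow_succ']
    exact mul_dvd_mul_left _ (ih g h2)

open Polynomial in
lemma int_of_large_mult (n : ℕ) (hn : 6 ≤ n) (A : Matrix (Fin n) (Fin n) ℤ) (l : ℝ)
    (hl0 : l ≠ 0) (hdet : A.det = 0)
    (hm : n - 3 ≤ eigMult (A.map (Int.cast : ℤ → ℝ)) l) : ∃ m : ℤ, l = m := by
  set B : Matrix (Fin n) (Fin n) ℝ := A.map (Int.cast : ℤ → ℝ) with hB
  set Q : Matrix (Fin n) (Fin n) ℚ := A.map (Int.cast : ℤ → ℚ) with hQ
  have hBA : B.charpoly = A.charpoly.map (algebraMap ℤ ℝ) := by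
    rw [← Matrix.charpoly_map]; rfl
  have hQA : Q.charpoly = A.charpoly.map (algebraMap ℤ ℚ) := by
    rw [← Matrix.charpoly_map]; rfl
  have hBQ : B.charpoly = Q.charpoly.map (algebraMap ℚ ℝ) := by
    rw [hBA, hQA, Polynomial.map_map]; congr 1
  have hmult : n - 3 ≤ B.charpoly.rootMultiplicity l := by
    refine hm.trans ?_
    have := LinearMap.finrank_eigenspace_le B.mulVecLin l
    rwa [Matrix.charpoly_mulVecLin] at this
  have hdvd : (X - C l) ^ (n - 3) ∣ Q.charpoly.map (algebraMap ℚ ℝ) := by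
    rw [← hBQ]
    exact (pow_dvd_pow _ hmult).trans (pow_rootMultiplicity_dvd _ _)
  have hrootB : B.charpoly.IsRoot l := by
    have : 0 < B.charpoly.rootMultiplicity l := by omega
    exact (rootMultiplicity_pos'.1 this).2
  have hint : IsIntegral ℤ l := by
    refine ⟨A.charpoly, A.charpoly_monic, ?_⟩
    rw [← eval_map, ← hBA]; exact hrootB
  have hintQ : IsIntegral ℚ l := hint.tower_top
  have hpk := minpoly_pow_dvd_of_rootMult l hintQ (n - 3) _ hdvd
  have hX : (X : ℚ[X]) ∣ Q.charpoly := by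
    rw [X_dvd_iff, hQA, coeff_map]
    have := Matrix.det_eq_sign_charpoly_coeff A
    rw [hdet] at this
    have h0 : A.charpoly.coeff 0 = 0 := by
      rcases mul_eq_zero.1 this.symm with h | h
      · exact absurd h (pow_ne_zero _ (by norm_num))
      · exact h
    simp [h0]
  have hcop : IsCoprime (X : ℚ[X]) ((minpoly ℚ l) ^ (n - 3)) := by
    apply IsCoprime.pow_right
    rw [(irreducible_X).coprime_iff_not_dvd, X_dvd_iff]
    exact fun h => hl0 ((minpoly.coeff_zero_eq_zero hintQ).1 h)
  have hdeg := natDegree_le_of_dvd (hcop.mul_dvd hX hpk) Q.charpoly_monic.ne_zero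
  rw [natDegree_mul X_ne_zero (pow_ne_zero _ (minpoly.ne_zero hintQ)), natDegree_pow, natDegree_X,
    Matrix.charpoly_natDegree_eq_dim, Fintype.card_fin] at hdeg
  have hpos := minpoly.natDegree_pos hintQ
  have hd1 : (minpoly ℚ l).natDegree = 1 := by
    by_contra hne
    have : 2 ≤ (minpoly ℚ l).natDegree := by omega
    have := Nat.mul_le_mul_left (n - 3) this
    omega
  obtain ⟨q, hq⟩ := minpoly.natDegree_eq_one_iff.1 hd1
  have hqi : IsIntegral ℤ q := by
    rw [← hq] at hint
    exact (isIntegral_algebraMap_iff (algebraMap ℚ ℝ).injective).1 hint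
  obtain ⟨m, hm'⟩ := IsIntegrallyClosed.isIntegral_iff.1 hqi
  refine ⟨m, ?_⟩
  rw [← hq, ← hm']
  simp

lemma distLaplacian_mulVec {n : ℕ} (G : SimpleGraph (Fin n)) (x : Fin n → ℝ) (i : Fin n) :
    (distLaplacian G *ᵥ x) i = (transmission G i : ℝ) * x i - ∑ j, (G.dist i j : ℝ) * x j := by
  have h : ∀ j, distLaplacian G i j * x j =
      (if i = j then (transmission G i : ℝ) * x j else 0) - (G.dist i j : ℝ) * x j := by
    intro j
    by_cases hij : i = j
    · subst hij; simp [distLaplacian, transmission]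
    · simp [distLaplacian, hij]
  simp only [Matrix.mulVec, dotProduct]
  rw [Finset.sum_congr rfl fun j _ => h j, Finset.sum_sub_distrib]
  simp

lemma distLaplacian_isHermitian {n : ℕ} (G : SimpleGraph (Fin n)) :
    (distLaplacian G).IsHermitian := by
  ext i j
  by_cases hij : i = j
  · subst hij; simp
  · simp [distLaplacian, hij, Ne.symm hij, SimpleGraph.dist_comm]

lemma eig_le_lambdaMax {n : ℕ} (M : Matrix (Fin n) (Fin n) ℝ) (μ : ℝ) (x : Fin n → ℝ) (hx : x ≠ 0)
    (h : M *ᵥ x = μ • x) : μ ≤ lambdaMax M := by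
  apply le_csSup
  · exact (Module.End.finite_hasEigenvalue M.mulVecLin).bddAbove
  · exact Module.End.hasEigenvalue_of_hasEigenvector
      ⟨Module.End.mem_eigenspace_iff.2 (by simpa using h), hx⟩

lemma quad_le {n : ℕ} (M : Matrix (Fin n) (Fin n) ℝ) (hM : M.IsHermitian) (x : Fin n → ℝ) :
    x ⬝ᵥ (M *ᵥ x) ≤ lambdaMax M * (x ⬝ᵥ x) := by
  have hH : (lambdaMax M • (1 : Matrix (Fin n) (Fin n) ℝ) - M).IsHermitian := by
    apply Matrix.IsHermitian.sub _ hM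
    ext i j
    by_cases hij : i = j
    · subst hij; simp
    · simp [hij, Ne.symm hij]
  have hP : (lambdaMax M • (1 : Matrix (Fin n) (Fin n) ℝ) - M).PosSemidef := by
    rw [hH.posSemidef_iff_eigenvalues_nonneg]
    intro i
    have h1 := hH.mulVec_eigenvectorBasis i
    have hne : (hH.eigenvectorBasis i).ofLp ≠ 0 := by
      intro h
      have := hH.eigenvectorBasis.orthonormal.ne_zero i
      apply this
      ext j
      simp [h]
    have h2 := eig_le_lambdaMax M (lambdaMax M - hH.eigenvalues i) _ hne (by
      rw [Matrix.sub_mulVec, Matrix.smul_mulVec, Matrix.one_mulVec] at h1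
      rw [sub_smul, ← h1]; simp)
    simp only [Pi.zero_apply]
    linarith
  have := hP.dotProduct_mulVec_nonneg x
  rw [Matrix.sub_mulVec, Matrix.smul_mulVec, Matrix.one_mulVec, dotProduct_sub, dotProduct_smul] at this
  simp at this
  linarith

lemma key_ineq {n : ℕ} (G : SimpleGraph (Fin n)) (hn : 6 ≤ n) (v : Fin n) :
    lambdaMax (distLaplacian G) ≤ n * (lambdaMax (distLaplacian G) - transmission G v) := by
  have h := quad_le _ (distLaplacian_isHermitian G) (1 - (n : ℝ) • Pi.single v 1)
  have h1 : distLaplacian G *ᵥ (1 : Fin n → ℝ) = 0 := by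
    ext i
    rw [distLaplacian_mulVec]
    simp [transmission]
  have h2 : (1 : Fin n → ℝ) ᵥ* distLaplacian G = 0 := by
    have hs : (distLaplacian G)ᵀ = distLaplacian G := by
      have h := distLaplacian_isHermitian G
      simp at h
      exact h
    rw [← Matrix.mulVec_transpose, hs, h1]
  have h3 : distLaplacian G v v = transmission G v := by simp [distLaplacian, transmission]
  rw [Matrix.mulVec_sub, h1, Matrix.mulVec_smul, zero_sub, sub_dotProduct, dotProduct_neg,
    dotProduct_smul, Matrix.dotProduct_mulVec, h2] at h
  simp [h3, sub_dotProduct, dotProduct_sub] at h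
  have hn' : (0 : ℝ) < n := by positivity
  nlinarith

/-- The integer version of the distance Laplacian. -/
noncomputable def distLapInt {n : ℕ} (G : SimpleGraph (Fin n)) : Matrix (Fin n) (Fin n) ℤ :=
  Matrix.of fun i j => (if i = j then (transmission G i : ℤ) else 0) - (G.dist i j : ℤ)

lemma distLapInt_map {n : ℕ} (G : SimpleGraph (Fin n)) :
    (distLapInt G).map (Int.cast : ℤ → ℝ) = distLaplacian G := by
  ext i j
  by_cases hij : i = j
  · subst hij; simp [distLapInt, distLaplacian, transmission]
  · simp [distLapInt, distLaplacian, hij]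

lemma distLapInt_det {n : ℕ} (hn : 6 ≤ n) (G : SimpleGraph (Fin n)) : (distLapInt G).det = 0 := by
  rw [← Matrix.exists_mulVec_eq_zero_iff]
  refine ⟨1, ?_, ?_⟩
  · intro h
    have := congrFun h ⟨0, by omega⟩
    simp at this
  · ext i
    simp [Matrix.mulVec, dotProduct, distLapInt, transmission, Finset.sum_sub_distrib]

lemma transmission_ge {n : ℕ} (G : SimpleGraph (Fin n)) (hG : G.Connected) (v : Fin n) :
    n - 1 ≤ transmission G v := by
  have h : ∀ u ∈ Finset.univ.erase v, 1 ≤ G.dist v u := fun u hu =>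
    hG.pos_dist_of_ne (Finset.ne_of_mem_erase hu).symm
  have h2 := Finset.card_nsmul_le_sum _ _ 1 h
  have h3 := Finset.sum_le_sum_of_subset (f := fun u => G.dist v u) (Finset.erase_subset v Finset.univ)
  simp at h2
  unfold transmission
  have h4 : n ≤ (∑ x, G.dist v x) + 1 := h2.trans (Nat.add_le_add_right h3 1)
  omega

lemma dist_one_of_transmission_le {n : ℕ} (G : SimpleGraph (Fin n)) (hG : G.Connected) (v : Fin n)
    (h : transmission G v ≤ n - 1) (u : Fin n) (hu : u ≠ v) : G.dist v u = 1 := by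
  by_contra hne
  have hpos : ∀ u ∈ Finset.univ.erase v, 1 ≤ G.dist v u := fun u hu =>
    hG.pos_dist_of_ne (Finset.ne_of_mem_erase hu).symm
  have hmem : u ∈ Finset.univ.erase v := by simp [hu]
  have hlt : ∑ w ∈ Finset.univ.erase v, 1 < ∑ w ∈ Finset.univ.erase v, G.dist v w := by
    apply Finset.sum_lt_sum hpos
    exact ⟨u, hmem, lt_of_le_of_ne (hpos u hmem) (Ne.symm hne)⟩
  have h3 := Finset.sum_le_sum_of_subset (f := fun u => G.dist v u) (Finset.erase_subset v Finset.univ)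
  simp at hlt
  unfold transmission at h
  omega

lemma complete_mult {n : ℕ} (hn : 6 ≤ n) (G : SimpleGraph (Fin n))
    (h : ∀ u v, u ≠ v → G.dist v u = 1) : n - 1 ≤ eigMult (distLaplacian G) n := by
  let f : (Fin n → ℝ) →ₗ[ℝ] ℝ := ∑ i, LinearMap.proj i
  have hT : ∀ v, (transmission G v : ℝ) = n - 1 := by
    intro v
    have : transmission G v = n - 1 := by
      unfold transmission
      rw [← Finset.add_sum_erase _ _ (Finset.mem_univ v),
        Finset.sum_congr rfl fun u hu => h u v (Finset.ne_of_mem_erase hu)]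
      simp
    rw [this, Nat.cast_sub (by omega)]; simp
  have hle : LinearMap.ker f ≤ Module.End.eigenspace (distLaplacian G).mulVecLin (n : ℝ) := by
    intro x hx
    have hx0 : ∑ i, x i = 0 := by simpa [f] using hx
    rw [Module.End.mem_eigenspace_iff]
    ext i
    rw [Matrix.mulVecLin_apply, distLaplacian_mulVec, hT]
    have h1 : ∑ j, (G.dist i j : ℝ) * x j = - x i := by
      rw [← Finset.add_sum_erase _ _ (Finset.mem_univ i)] at hx0 ⊢
      rw [Finset.sum_congr rfl fun u hu => by rw [h u i (Finset.ne_of_mem_erase hu)]]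
      simp at hx0 ⊢
      linarith
    rw [h1]; simp; ring
  have h1 := Submodule.finrank_mono hle
  have h2 := LinearMap.finrank_range_add_finrank_ker f
  have h3 := Submodule.finrank_le (LinearMap.range f)
  simp at h2 h3
  unfold eigMult
  omega

/-- If `G` is a connected graph on `n ≥ 6` vertices whose largest distance
Laplacian eigenvalue `∂ᴸ₁` has multiplicity `n - 3`, then `∂ᴸ₁ ≥ max_v Tr(v) + 2`;
moreover, if `∂ᴸ₁ = Tr(v₀) + 2` for some vertex `v₀`, then `Tr(v₀) = max_v Tr(v)`. -/
theorem largest_distLaplacian_eigenvalue_ge_maxTrans_add_two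
    (n : ℕ) (hn : 6 ≤ n) (G : SimpleGraph (Fin n)) (hG : G.Connected)
    (hmult : eigMult (distLaplacian G) (lambdaMax (distLaplacian G)) = n - 3) :
    ((Finset.univ.sup (transmission G) : ℕ) : ℝ) + 2 ≤ lambdaMax (distLaplacian G) ∧
      ∀ v₀ : Fin n, lambdaMax (distLaplacian G) = (transmission G v₀ : ℝ) + 2 →
        transmission G v₀ = Finset.univ.sup (transmission G) := by
  set l := lambdaMax (distLaplacian G) with hl
  have : Nonempty (Fin n) := ⟨⟨0, by omega⟩⟩
  have hle : ∀ v, transmission G v ≤ Finset.univ.sup (transmission G) := fun v =>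
    Finset.le_sup (Finset.mem_univ v)
  have main : ((Finset.univ.sup (transmission G) : ℕ) : ℝ) + 2 ≤ l := by
    obtain ⟨v, -, hv⟩ := Finset.exists_mem_eq_sup Finset.univ Finset.univ_nonempty (transmission G)
    rw [hv] at hle ⊢
    by_contra hlt
    have hlt : l < (transmission G v : ℝ) + 2 := not_le.1 hlt
    have hk := key_ineq G hn v
    rw [← hl] at hk
    have hn' : (6 : ℝ) ≤ n := by exact_mod_cast hn
    have hTn : (n : ℝ) ≤ transmission G v + 1 := by
      have := transmission_ge G hG v
      exact_mod_cast (by omega : n ≤ transmission G v + 1)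
    have hl0 : 0 < l := by
      by_contra hneg
      nlinarith
    obtain ⟨m, hm⟩ := int_of_large_mult n hn (distLapInt G) l hl0.ne' (distLapInt_det hn G)
      (by rw [distLapInt_map, hmult])
    have ha : m ≤ transmission G v + 1 := by
      have : (m : ℝ) < transmission G v + 2 := by rw [← hm]; exact hlt
      have : m < transmission G v + 2 := by exact_mod_cast this
      omega
    have ha' : l ≤ transmission G v + 1 := by rw [hm]; exact_mod_cast ha
    have hln : l ≤ n := by nlinarith
    have hmT : (transmission G v : ℤ) < m := by
      have : (transmission G v : ℝ) < m := by
        rw [← hm]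
        by_contra hc
        nlinarith
      exact_mod_cast this
    have hlT : l = transmission G v + 1 := by
      rw [hm]; exact_mod_cast (by omega : m = transmission G v + 1)
    have hle2 : transmission G v ≤ n - 1 := by
      have : transmission G v + 1 ≤ n := by
        rw [hlT] at hln; exact_mod_cast hln
      omega
    have hc := complete_mult hn G fun u w huw =>
      dist_one_of_transmission_le G hG w ((hle w).trans hle2) u huw
    have : (n : ℝ) = l := by linarith
    rw [this, hmult] at hc
    omega
  refine ⟨main, fun v₀ h => le_antisymm (hle v₀) ?_⟩
  rw [h] at main
  have : ((Finset.univ.sup (transmission G) : ℕ) : ℝ) ≤ transmission G v₀ := by linarith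
  exact_mod_cast this
end
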